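/- Let M₁, M₂, M₃ ∈ Matrix (Fin 3) (Fin 3) ℝ be symmetric matrices with associated quadratic forms Qᵢ(v) = vᵀMᵢv, and suppose that the binary sextic form p(t₀, t₁) := det(t₀²M₁ + 2t₀t₁M₂ + t₁²M₃) is nonzero and squarefree as a homogeneous polynomial in ℂ[t₀, t₁] (equivalently, the genus 2 curve Γ : y² = −p is smooth). Let ℝP¹ be the quotient topological space of ℝ²∖{0} by the scaling action of ℝ∖{0}, and let S₁ := { [t₀ : t₁] ∈ ℝP¹ : ∃ v ∈ ℝ³∖{0}, t₀²Q₁(v) + 2t₀t₁Q₂(v) + t₁²Q₃(v) ≥ 0 } (the image in ℝP¹ of the real points of the quadric surface bundle π₁ : Y → ℙ¹; note this condition is invariant under scaling of (t₀,t₁)). Then S₁ has at most three connected components. (Consequently Y(ℝ) has at most three connected components.) -/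

import Mathlib

/-- The scaling relation on nonzero vectors of `ℝⁿ`. -/
def projRel (n : ℕ) (v w : {x : Fin n → ℝ // x ≠ 0}) : Prop :=
  ∃ c : ℝ, c ≠ 0 ∧ c • (v : Fin n → ℝ) = (w : Fin n → ℝ)

/-- The real projective space `ℝPⁿ⁻¹`, as the quotient topological space of `ℝⁿ ∖ {0}` by the
scaling action of `ℝ ∖ {0}`. -/
def RP (n : ℕ) : Type := Quot (projRel n)

instance (n : ℕ) : TopologicalSpace (RP n) :=
  inferInstanceAs (TopologicalSpace (Quot (projRel n)))

open MvPolynomial in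
/-- The binary sextic form `det(t₀²M₁ + 2t₀t₁M₂ + t₁²M₃)`, as a polynomial in `ℂ[t₀, t₁]`. -/
noncomputable def binarySextic (M₁ M₂ M₃ : Matrix (Fin 3) (Fin 3) ℝ) :
    MvPolynomial (Fin 2) ℂ :=
  Matrix.det (Matrix.of fun i j =>
    X 0 ^ 2 * C (M₁ i j : ℂ) + 2 * X 0 * X 1 * C (M₂ i j : ℂ) + X 1 ^ 2 * C (M₃ i j : ℂ))

/-!
Put `B(t) = -(t₀²M₁ + 2t₀t₁M₂ + t₁²M₃)`, so that `S₁` is the set of `[t]` at which `B(t)` is not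
positive definite. If `B` is nowhere positive definite, then `S₁` is all of `ℝP¹`. Otherwise take a
point where it is positive definite as the point at infinity; `S₁` becomes a compact subset of `ℝ`
whose frontier consists of roots of `det B(a + s b)`, a polynomial of degree at most `6`. These
roots are simple, so the determinant is negative on one side of each of them, and no component of
`S₁` is a single point. Every component is thus an interval with two distinct endpoints, all
endpoints are different roots, and there are at most `6 / 2 = 3` components.
-/

section Components

open Set Filter Topology

theorem isCompact_connectedComponentIn {X : Type*} [TopologicalSpace X] {s : Set X}
    (hs : IsCompact s) (x : X) : IsCompact (connectedComponentIn s x) := by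
  by_cases hx : x ∈ s
  · have := isCompact_iff_compactSpace.1 hs
    rw [connectedComponentIn_eq_image hx]
    exact isClosed_connectedComponent.isCompact.image continuous_subtype_val
  · simp [connectedComponentIn_eq_empty hx]

theorem connectedComponents_mk_eq_of_mem {X : Type*} [TopologicalSpace X] {s : Set X} {x y : s}
    {z : X} (hx : z ∈ connectedComponentIn s x) (hy : z ∈ connectedComponentIn s y) :
    ConnectedComponents.mk x = ConnectedComponents.mk y := by
  have hxy : (x : X) ∈ connectedComponentIn s y := by
    rw [connectedComponentIn_eq hy, ← connectedComponentIn_eq hx]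
    exact mem_connectedComponentIn x.2
  rw [connectedComponentIn_eq_image y.2] at hxy
  rw [ConnectedComponents.coe_eq_coe']
  simpa using hxy

theorem card_connectedComponents_le_of_surjective {X Y : Type*} [TopologicalSpace X]
    [TopologicalSpace Y] {f : X → Y} (hf : Continuous f) (hsurj : Function.Surjective f) :
    ENat.card (ConnectedComponents Y) ≤ ENat.card (ConnectedComponents X) := by
  have h : Function.Surjective hf.connectedComponentsMap := by
    refine ConnectedComponents.surjective_coe.forall.2 fun y => ?_
    obtain ⟨x, rfl⟩ := hsurj y
    exact ⟨x, rfl⟩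
  exact ENat.card_le_card_of_injective (Function.injective_surjInv h)

theorem exists_injective_fin_of_card_le {α : Type*} {n : ℕ} (h : ENat.card α ≤ n) :
    ∃ f : α → Fin n, Function.Injective f := by
  have hfin : Finite α := ENat.card_lt_top.1 (h.trans_lt (ENat.natCast_lt_top n))
  rw [ENat.card_eq_coe_natCard, Nat.cast_le] at h
  exact ⟨_, (Fin.castLE_injective h).comp (Finite.equivFin α).injective⟩

variable {α : Type*} [ConditionallyCompleteLinearOrder α] [DenselyOrdered α] [TopologicalSpace α]
  [OrderTopology α] {s : Set α} {x a : α}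

theorem mem_frontier_of_isLeast_connectedComponentIn [NoMinOrder α]
    (ha : IsLeast (connectedComponentIn s x) a) : a ∈ frontier s := by
  refine ⟨subset_closure (connectedComponentIn_subset _ _ ha.1), fun hint => ?_⟩
  obtain ⟨b, hba, hb⟩ := mem_nhdsLE_iff_exists_Icc_subset.1
    (mem_nhdsWithin_of_mem_nhds (mem_interior_iff_mem_nhds.1 hint))
  have hsub := isPreconnected_Icc.subset_connectedComponentIn (right_mem_Icc.2 hba.le) hb
  rw [← connectedComponentIn_eq ha.1] at hsub
  exact hba.not_ge (ha.2 (hsub (left_mem_Icc.2 hba.le)))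

theorem mem_frontier_of_isGreatest_connectedComponentIn [NoMaxOrder α]
    (ha : IsGreatest (connectedComponentIn s x) a) : a ∈ frontier s :=
  mem_frontier_of_isLeast_connectedComponentIn (α := αᵒᵈ) ha

theorem connectedComponentIn_nontrivial_of_mem_nhdsGT [NoMaxOrder α] (hx : x ∈ s)
    (h : s ∈ 𝓝[>] x) : (connectedComponentIn s x).Nontrivial := by
  obtain ⟨b, hxb, hb⟩ := mem_nhdsGE_iff_exists_Icc_subset.1
    (show s ∈ 𝓝[≥] x by simp [← Ioi_insert, hx, h])
  have hsub := isPreconnected_Icc.subset_connectedComponentIn (left_mem_Icc.2 hxb.le) hb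
  exact ⟨x, mem_connectedComponentIn hx, b, hsub (right_mem_Icc.2 hxb.le), hxb.ne⟩

theorem connectedComponentIn_nontrivial_of_mem_nhdsLT [NoMinOrder α] (hx : x ∈ s)
    (h : s ∈ 𝓝[<] x) : (connectedComponentIn s x).Nontrivial :=
  connectedComponentIn_nontrivial_of_mem_nhdsGT (α := αᵒᵈ) hx h

theorem two_mul_card_connectedComponents_le_encard_frontier [NoMinOrder α] [NoMaxOrder α]
    (hs : IsCompact s) (hnt : ∀ x ∈ s, (connectedComponentIn s x).Nontrivial) :
    2 * ENat.card (ConnectedComponents s) ≤ (frontier s).encard := by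
  let C (c : ConnectedComponents s) : Set α :=
    connectedComponentIn s (Function.surjInv ConnectedComponents.surjective_coe c : s)
  have hC_nt (c) : (C c).Nontrivial := hnt _ (Subtype.coe_prop _)
  have hC_disj {c d z} (hc : z ∈ C c) (hd : z ∈ C d) : c = d := by
    simpa [Function.surjInv_eq] using connectedComponents_mk_eq_of_mem hc hd
  choose l hl using fun c => (isCompact_connectedComponentIn hs _).exists_isLeast (hC_nt c).nonempty
  choose r hr using
    fun c => (isCompact_connectedComponentIn hs _).exists_isGreatest (hC_nt c).nonempty
  have hlr (c d) : l c ≠ r d := fun h => by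
    obtain rfl : c = d := hC_disj (hl c).1 (h ▸ (hr d).1)
    refine not_subsingleton_iff.2 (hC_nt c) fun y hy z hz => le_antisymm ?_ ?_
    · exact ((hr c).2 hy).trans (h ▸ (hl c).2 hz)
    · exact ((hr c).2 hz).trans (h ▸ (hl c).2 hy)
  have hinj : Function.Injective (Sum.elim l r) := .sumElim
    (fun c d h => hC_disj (hl c).1 (h ▸ (hl d).1))
    (fun c d h => hC_disj (hr c).1 (h ▸ (hr d).1)) hlr
  have hmem : ∀ i, Sum.elim l r i ∈ frontier s := Sum.rec
    (fun c => mem_frontier_of_isLeast_connectedComponentIn (hl c))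
    (fun c => mem_frontier_of_isGreatest_connectedComponentIn (hr c))
  calc 2 * ENat.card (ConnectedComponents s)
      = ENat.card (ConnectedComponents s ⊕ ConnectedComponents s) := by rw [ENat.card_sum, two_mul]
    _ ≤ ENat.card (frontier s) :=
      ENat.card_le_card_of_injective ((Set.injective_codRestrict hmem).2 hinj)
    _ = (frontier s).encard := rfl

end Components

section PosDef

open Matrix Metric Topology

variable {X ι : Type*} [TopologicalSpace X] {A : Matrix ι ι ℝ} {F : X → Matrix ι ι ℝ}

theorem posDef_iff_forall_mem_sphere [Fintype ι] (hA : A.IsSymm) :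
    A.PosDef ↔ ∀ v ∈ sphere (0 : ι → ℝ) 1, 0 < v ⬝ᵥ A *ᵥ v := by
  refine ⟨fun h v hv => h.dotProduct_mulVec_pos (ne_of_mem_sphere hv one_ne_zero), fun h =>
    .of_dotProduct_mulVec_pos (isHermitian_iff_isSymm.2 hA) fun v hv => ?_⟩
  have hunit := h (‖v‖⁻¹ • v) (mem_sphere_zero_iff_norm.2 (norm_smul_inv_norm (𝕜 := ℝ) hv))
  rw [mulVec_smul, dotProduct_smul, smul_dotProduct, smul_smul, smul_eq_mul] at hunit
  exact pos_of_mul_pos_right hunit (by positivity)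

theorem isOpen_setOf_posDef [Finite ι] (hF : Continuous F) (hsymm : ∀ x, (F x).IsSymm) :
    IsOpen {x | (F x).PosDef} := by
  have := Fintype.ofFinite ι
  simp only [posDef_iff_forall_mem_sphere (hsymm _)]
  refine isOpen_iff_eventually.2 fun x hx =>
    (isCompact_sphere 0 1).eventually_forall_of_forall_eventually fun v hv => ?_
  have hcont : Continuous fun z : X × (ι → ℝ) => z.2 ⬝ᵥ F z.1 *ᵥ z.2 :=
    continuous_snd.dotProduct ((hF.comp continuous_fst).matrix_mulVec continuous_snd)
  exact hcont.continuousAt.eventually (lt_mem_nhds (hx v hv))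

theorem isClosed_setOf_posSemidef [Finite ι] (hF : Continuous F) :
    IsClosed {x | (F x).PosSemidef} := by
  have := Fintype.ofFinite ι
  simp only [posSemidef_iff_dotProduct_mulVec, IsHermitian, Set.ofPred_and, Set.ofPred_forall]
  exact (isClosed_eq hF.matrix_conjTranspose hF).inter <| isClosed_iInter fun v =>
    isClosed_le continuous_const (continuous_const.dotProduct (hF.matrix_mulVec continuous_const))

theorem frontier_setOf_posDef_subset [Fintype ι] [DecidableEq ι] (hF : Continuous F)
    (hsymm : ∀ x, (F x).IsSymm) : frontier {x | (F x).PosDef} ⊆ {x | (F x).det = 0} := by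
  intro x hx
  rw [(isOpen_setOf_posDef hF hsymm).frontier_eq] at hx
  have hsemi : (F x).PosSemidef :=
    closure_minimal (fun _ h => h.posSemidef) (isClosed_setOf_posSemidef hF) hx.1
  by_contra hdet
  exact hx.2 (hsemi.posDef_iff_det_ne_zero.2 hdet)

end PosDef

section SignChange

open Filter Topology

theorem eventually_neg_nhdsGT_or_nhdsLT_of_deriv_ne_zero {f : ℝ → ℝ} {x : ℝ} (hf : f x = 0)
    (hf' : deriv f x ≠ 0) : (∀ᶠ y in 𝓝[>] x, f y < 0) ∨ ∀ᶠ y in 𝓝[<] x, f y < 0 := by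
  rcases hf'.lt_or_gt with hneg | hpos
  · left
    filter_upwards [nhdsWithin_le_nhds (eventually_nhdsWithin_sign_eq_of_deriv_neg hneg hf),
      self_mem_nhdsWithin] with y hy hxy
    exact sign_eq_neg_one_iff.1 (hy.trans (sign_eq_neg_one_iff.2 (sub_neg.2 hxy)))
  · right
    filter_upwards [nhdsWithin_le_nhds (eventually_nhdsWithin_sign_eq_of_deriv_pos hpos hf),
      self_mem_nhdsWithin] with y hy hxy
    exact sign_eq_neg_one_iff.1 (hy.trans (sign_eq_neg_one_iff.2 (sub_neg.2 hxy)))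

end SignChange

section BinaryForms

open MvPolynomial

variable {R A : Type*} [CommRing R] [CommRing A] [Algebra R A] {σ : Type*}

theorem aeval_mul_of_isHomogeneous {p : MvPolynomial σ R} {d : ℕ} (hp : p.IsHomogeneous d) (c : A)
    (x : σ → A) : aeval (fun i => c * x i) p = c ^ d * aeval x p := by
  simp only [aeval_def, eval₂_eq, Finset.mul_sum]
  refine Finset.sum_congr rfl fun m hm => ?_
  have hdeg : ∑ i ∈ m.support, m i = d := hp.degree_eq_sum_deg_support hm ▸ rfl
  simp only [mul_pow, Finset.prod_mul_distrib, Finset.prod_pow_eq_pow_sum, hdeg]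
  ring

theorem derivative_aeval_eq_sum [Fintype σ] (g : σ → Polynomial A) (p : MvPolynomial σ R) :
    (aeval g p).derivative = ∑ i, (g i).derivative * aeval g (pderiv i p) := by
  classical
  induction p using MvPolynomial.induction_on with
  | C r => simp [Polynomial.algebraMap_apply]
  | add p q hp hq => simp only [map_add, hp, hq, mul_add, Finset.sum_add_distrib]
  | mul_X p j hp =>
    have hX : ∑ i, (g i).derivative * aeval g (pderiv i (X j : MvPolynomial σ R)) =
        (g j).derivative := by
      simp [pderiv_X, Pi.single_apply, apply_ite]
    simp only [pderiv_mul, map_mul, map_add, aeval_X, Polynomial.derivative_mul, hp, mul_add,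
      Finset.sum_add_distrib, mul_left_comm _ (aeval g p), ← Finset.mul_sum, hX]
    simp only [← mul_assoc, ← Finset.sum_mul]

theorem isHomogeneous_det {ι : Type*} [Fintype ι] [DecidableEq ι]
    {B : Matrix ι ι (MvPolynomial σ R)} {d : ℕ} (hB : ∀ i j, (B i j).IsHomogeneous d) :
    B.det.IsHomogeneous (Fintype.card ι * d) := by
  rw [Matrix.det_apply]
  refine .sum _ _ _ fun τ _ => ?_
  have hprod := IsHomogeneous.prod Finset.univ (fun i => B (τ i) i) (fun _ => d) fun i _ => hB _ _
  rw [Units.smul_def, zsmul_eq_mul, ← map_intCast (C : R →+* MvPolynomial σ R)]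
  simpa only [Finset.sum_const, Finset.card_univ, smul_eq_mul, zero_add]
    using (isHomogeneous_C σ _).mul hprod

/-- The univariate polynomial `p(a + X b)`, i.e. `p` along the line through `a` in the
direction `b`. -/
noncomputable def restrictLine (a b : σ → A) (p : MvPolynomial σ R) : Polynomial A :=
  aeval (fun i => .C (a i) + .C (b i) * .X) p

theorem eval_restrictLine (a b : σ → A) (p : MvPolynomial σ R) (s : A) :
    (restrictLine a b p).eval s = aeval (a + s • b) p := by
  have h := comp_aeval_apply (fun i => .C (a i) + .C (b i) * .X)
    ((Polynomial.aeval s).restrictScalars R : Polynomial A →ₐ[R] A) p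
  simpa [restrictLine, Pi.add_def, Pi.smul_def, mul_comm s] using h

theorem eval_derivative_restrictLine [Fintype σ] (a b : σ → A) (p : MvPolynomial σ R) (s : A) :
    (restrictLine a b p).derivative.eval s = ∑ i, b i * aeval (a + s • b) (pderiv i p) := by
  simp [restrictLine, derivative_aeval_eq_sum, Polynomial.eval_finsetSum, ← eval_restrictLine]

theorem natDegree_restrictLine_le {p : MvPolynomial σ R} {d : ℕ} (hp : p.IsHomogeneous d)
    (a b : σ → R) : (restrictLine a b p).natDegree ≤ d := by
  have hline (i) : (Polynomial.C (a i) + .C (b i) * .X).natDegree ≤ 1 := by compute_degree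
  simpa only [mul_one, restrictLine] using aeval_natDegree_le p hp.totalDegree_le _ hline

/-- The linear form on the plane whose zeros are the multiples of `t`. -/
noncomputable def linForm (t : Fin 2 → R) : MvPolynomial (Fin 2) R :=
  C (t 0) * X 1 - C (t 1) * X 0

variable {K : Type*} [Field K]

-- With `D = det (t, b)` we have `m t + ℓ b = D X`, where `ℓ` is the linear form of `t` and `-m`
-- that of `b`; hence `D ^ d p = p (m t + ℓ b)` is a Taylor polynomial in `ℓ` whose coefficients of
-- order zero and one are multiples of the values of `p` and of its derivative along `b` at `t`.
theorem linForm_sq_dvd_of_isRoot {p : MvPolynomial (Fin 2) K} {d : ℕ} (hp : p.IsHomogeneous d)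
    {a b : Fin 2 → K} {s : K} (hab : a 0 * b 1 ≠ a 1 * b 0) (hroot : (restrictLine a b p).IsRoot s)
    (hderiv : (restrictLine a b p).derivative.IsRoot s) :
    linForm (a + s • b) ^ 2 ∣ p := by
  set t := a + s • b with ht
  let m : MvPolynomial (Fin 2) K := X 0 * C (b 1) - X 1 * C (b 0)
  have hD : t 0 * b 1 - t 1 * b 0 ≠ 0 := by
    simpa [ht, add_mul, mul_right_comm _ (b 0), sub_eq_zero] using hab
  have hscale {q : MvPolynomial (Fin 2) K} {n : ℕ} (hq : q.IsHomogeneous n) :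
      aeval (fun i => m * C (t i)) q = m ^ n * C (aeval t q) := by
    rw [aeval_mul_of_isHomogeneous hq]
    exact congrArg _ (aeval_algebraMap_apply _ t q)
  let f := restrictLine (fun i => m * C (t i)) (fun i => C (b i)) p
  have hf : f.eval 0 = 0 := by
    rw [eval_restrictLine, zero_smul, add_zero, hscale hp, ← eval_restrictLine, hroot.eq_zero,
      map_zero, mul_zero]
  have hf' : f.derivative.eval 0 = 0 := by
    rw [Polynomial.IsRoot, eval_derivative_restrictLine] at hderiv
    calc f.derivative.eval 0 = ∑ i, C (b i) * (m ^ (d - 1) * C (aeval t (pderiv i p))) := by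
          simp only [f, eval_derivative_restrictLine, zero_smul, add_zero, hscale hp.pderiv]
      _ = m ^ (d - 1) * C (∑ i, b i * aeval t (pderiv i p)) := by
          simp only [map_sum, map_mul, Finset.mul_sum, mul_left_comm]
      _ = 0 := by rw [hderiv, map_zero, mul_zero]
  have hline (i) : m * C (t i) + linForm t * C (b i) = C (t 0 * b 1 - t 1 * b 0) * X i := by
    fin_cases i <;> simp [m, linForm] <;> ring
  have heval : f.eval (linForm t) = C (t 0 * b 1 - t 1 * b 0) ^ d * p := by
    rw [eval_restrictLine, ← aeval_X_left_apply p, ← aeval_mul_of_isHomogeneous (by simpa using hp)]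
    simp [Pi.add_def, hline]
  obtain ⟨k, hk⟩ := f.binomExpansion 0 (linForm t)
  rw [zero_add, hf, hf', zero_mul, zero_add, zero_add, heval, ← map_pow] at hk
  have hunit : IsUnit (C (σ := Fin 2) ((t 0 * b 1 - t 1 * b 0) ^ d)) :=
    (pow_ne_zero d hD).isUnit.map C
  exact hunit.dvd_mul_left.1 ⟨k, hk.trans (mul_comm _ _)⟩

end BinaryForms

section PosDefOnLine

open Matrix Set Filter Topology

variable {ι : Type*} [Fintype ι] [DecidableEq ι] {F : ℝ → Matrix ι ι ℝ} {P : Polynomial ℝ}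

theorem eventually_not_posDef_nhdsGT_or_nhdsLT (hdet : ∀ s, (F s).det = P.eval s) {x : ℝ}
    (hx : P.IsRoot x) (hx' : ¬P.derivative.IsRoot x) :
    (∀ᶠ s in 𝓝[>] x, ¬(F s).PosDef) ∨ ∀ᶠ s in 𝓝[<] x, ¬(F s).PosDef := by
  have hneg {s} (hs : P.eval s < 0) : ¬(F s).PosDef := fun h => (hdet s ▸ h.det_pos).not_gt hs
  have hderiv : deriv (fun s => P.eval s) x ≠ 0 := by rwa [Polynomial.deriv]
  exact (eventually_neg_nhdsGT_or_nhdsLT_of_deriv_ne_zero hx.eq_zero hderiv).imp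
    (·.mono fun _ => hneg) (·.mono fun _ => hneg)

theorem connectedComponentIn_setOf_not_posDef_nontrivial (hF : Continuous F)
    (hsymm : ∀ s, (F s).IsSymm) (hdet : ∀ s, (F s).det = P.eval s)
    (hP : ∀ s, P.IsRoot s → ¬P.derivative.IsRoot s) {x : ℝ} (hx : ¬(F x).PosDef) :
    (connectedComponentIn {s | ¬(F s).PosDef} x).Nontrivial := by
  by_cases hroot : P.IsRoot x
  · obtain h | h := eventually_not_posDef_nhdsGT_or_nhdsLT hdet hroot (hP x hroot)
    · exact connectedComponentIn_nontrivial_of_mem_nhdsGT hx h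
    · exact connectedComponentIn_nontrivial_of_mem_nhdsLT hx h
  · refine connectedComponentIn_nontrivial_of_mem_nhdsGT hx (mem_nhdsWithin_of_mem_nhds ?_)
    by_contra hnhds
    rw [← mem_interior_iff_mem_nhds] at hnhds
    have hfr : x ∈ frontier {s | (F s).PosDef} := by
      rw [← frontier_compl]
      exact ⟨subset_closure hx, hnhds⟩
    exact hroot ((hdet x).symm.trans (frontier_setOf_posDef_subset hF hsymm hfr))

theorem two_mul_card_connectedComponents_setOf_not_posDef_le (hF : Continuous F)
    (hsymm : ∀ s, (F s).IsSymm) (hdet : ∀ s, (F s).det = P.eval s)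
    (hP : ∀ s, P.IsRoot s → ¬P.derivative.IsRoot s)
    (hbdd : Bornology.IsBounded {s | ¬(F s).PosDef}) :
    2 * ENat.card (ConnectedComponents {s | ¬(F s).PosDef}) ≤ P.natDegree := by
  have hP0 : P ≠ 0 := by
    rintro rfl
    exact hP 0 (by simp) (by simp)
  have hcompact : IsCompact {s | ¬(F s).PosDef} :=
    Metric.isCompact_of_isClosed_isBounded (isOpen_setOf_posDef hF hsymm).isClosed_compl hbdd
  have hfrontier : frontier {s | ¬(F s).PosDef} ⊆ P.roots.toFinset := fun s hs => by
    rw [Finset.mem_coe, Multiset.mem_toFinset, Polynomial.mem_roots hP0]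
    exact (hdet s).symm.trans
      (frontier_setOf_posDef_subset hF hsymm (frontier_compl {s | (F s).PosDef} ▸ hs))
  calc 2 * ENat.card (ConnectedComponents {s | ¬(F s).PosDef})
      ≤ (frontier {s | ¬(F s).PosDef}).encard :=
        two_mul_card_connectedComponents_le_encard_frontier hcompact fun _ hs =>
          connectedComponentIn_setOf_not_posDef_nontrivial hF hsymm hdet hP hs
    _ ≤ (P.roots.toFinset : Set ℝ).encard := encard_le_encard hfrontier
    _ ≤ P.natDegree := by
        rw [encard_coe_eq_coe_finsetCard]
        exact_mod_cast (Multiset.toFinset_card_le _).trans P.card_roots'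

end PosDefOnLine

section ProjectiveSpace

open Set Topology

theorem projRel_equivalence (n : ℕ) : Equivalence (projRel n) where
  refl v := ⟨1, one_ne_zero, one_smul ℝ _⟩
  symm := fun ⟨c, hc, hvw⟩ => ⟨c⁻¹, inv_ne_zero hc, by rw [← hvw, inv_smul_smul₀ hc]⟩
  trans := fun ⟨c, hc, huv⟩ ⟨c', hc', hvw⟩ =>
    ⟨c' * c, mul_ne_zero hc' hc, by rw [mul_smul, huv, hvw]⟩

theorem preconnectedSpace_RP {n : ℕ} (hn : 1 < n) : PreconnectedSpace (RP n) := by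
  have hconn : IsConnected ({0}ᶜ : Set (Fin n → ℝ)) :=
    isConnected_compl_singleton_of_one_lt_rank (by simpa using hn) 0
  have : PreconnectedSpace {t : Fin n → ℝ // t ≠ 0} :=
    Subtype.preconnectedSpace hconn.isPreconnected
  exact (Quot.mk_surjective.denseRange (f := Quot.mk (projRel n))).preconnectedSpace
    continuous_quot_mk

/-- The affine chart `s ↦ [a + s b]` of the real projective line; it misses only the point `[b]`. -/
def affineChart (a b : Fin 2 → ℝ) (hab : a 0 * b 1 ≠ a 1 * b 0) (s : ℝ) : RP 2 :=
  Quot.mk _ ⟨a + s • b, fun h => hab <| by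
    have h0 : a 0 + s * b 0 = 0 := congrFun h 0
    have h1 : a 1 + s * b 1 = 0 := congrFun h 1
    linear_combination b 1 * h0 - b 0 * h1⟩

theorem continuous_affineChart (a b : Fin 2 → ℝ) (hab : a 0 * b 1 ≠ a 1 * b 0) :
    Continuous (affineChart a b hab) :=
  continuous_quot_mk.comp (Continuous.subtype_mk (by fun_prop) _)

theorem mem_range_affineChart {a b : Fin 2 → ℝ} (hab : a 0 * b 1 ≠ a 1 * b 0) (hb : b ≠ 0)
    {x : RP 2} (hx : x ≠ Quot.mk _ ⟨b, hb⟩) : x ∈ range (affineChart a b hab) := by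
  obtain ⟨⟨t, ht⟩, rfl⟩ := Quot.exists_rep x
  obtain ⟨u, v, rfl⟩ : ∃ u v : ℝ, t = u • a + v • b := by
    have hD : a 0 * b 1 - a 1 * b 0 ≠ 0 := sub_ne_zero.2 hab
    refine ⟨(t 0 * b 1 - t 1 * b 0) / (a 0 * b 1 - a 1 * b 0),
      (a 0 * t 1 - a 1 * t 0) / (a 0 * b 1 - a 1 * b 0), funext <| Fin.forall_fin_two.2 ⟨?_, ?_⟩⟩
    all_goals
      rw [Pi.add_apply, Pi.smul_apply, Pi.smul_apply, smul_eq_mul, smul_eq_mul,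
        div_mul_eq_mul_div, div_mul_eq_mul_div, ← add_div, eq_div_iff hD]
      ring
  have hu : u ≠ 0 := by
    rintro rfl
    rw [zero_smul, zero_add] at ht
    exact hx (Quot.sound ⟨v, left_ne_zero_of_smul ht, by simp⟩).symm
  exact ⟨v / u, Quot.sound ⟨u, hu, by simp [smul_smul, mul_div_cancel₀ _ hu]⟩⟩

end ProjectiveSpace

section NonPosDefLocus

open MvPolynomial Set Filter Topology

variable {ι : Type*}

/-- The points `[t]` of the real projective line at which a symmetric matrix `B` of binary forms of
even degree fails to be positive definite; for such `B` the representative `t` does not matter. -/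
def nonPosDefLocus (B : Matrix ι ι (MvPolynomial (Fin 2) ℝ)) : Set (RP 2) :=
  {x | ∃ t : {x : Fin 2 → ℝ // x ≠ 0}, Quot.mk (projRel 2) t = x ∧ ¬(B.map (eval t.1)).PosDef}

variable {B : Matrix ι ι (MvPolynomial (Fin 2) ℝ)} {d : ℕ}

theorem posDef_map_eval_smul_iff (hB : ∀ i j, (B i j).IsHomogeneous d) (hd : Even d)
    {c : ℝ} (hc : c ≠ 0) (t : Fin 2 → ℝ) :
    (B.map (eval (c • t))).PosDef ↔ (B.map (eval t)).PosDef := by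
  have hsmul : B.map (eval (c • t)) = c ^ d • B.map (eval t) := by
    ext i j
    exact aeval_mul_of_isHomogeneous (hB i j) c t
  have hpos : 0 < c ^ d := hd.pow_pos hc
  rw [hsmul]
  refine ⟨fun h => ?_, fun h => h.smul hpos⟩
  simpa [smul_smul, inv_mul_cancel₀ hpos.ne'] using h.smul (inv_pos.2 hpos)

theorem mk_mem_nonPosDefLocus (hB : ∀ i j, (B i j).IsHomogeneous d) (hd : Even d)
    {t : {x : Fin 2 → ℝ // x ≠ 0}} :
    Quot.mk (projRel 2) t ∈ nonPosDefLocus B ↔ ¬(B.map (eval t.1)).PosDef := by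
  refine ⟨fun ⟨t', heq, h⟩ => ?_, fun h => ⟨t, rfl, h⟩⟩
  obtain ⟨c, hc, hct⟩ := ((projRel_equivalence 2).quot_mk_eq_iff _ _).1 heq
  rwa [← hct, posDef_map_eval_smul_iff hB hd hc]

theorem affineChart_mem_nonPosDefLocus (hB : ∀ i j, (B i j).IsHomogeneous d) (hd : Even d)
    {a b : Fin 2 → ℝ} (hab : a 0 * b 1 ≠ a 1 * b 0) {s : ℝ} :
    affineChart a b hab s ∈ nonPosDefLocus B ↔ ¬(B.map (eval (a + s • b))).PosDef :=
  mk_mem_nonPosDefLocus hB hd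

theorem continuous_map_eval {X : Type*} [TopologicalSpace X] {g : X → Fin 2 → ℝ}
    (hg : Continuous g) : Continuous fun x => B.map (eval (g x)) :=
  continuous_matrix fun i j => (continuous_eval (B i j)).comp hg

theorem isBounded_setOf_not_posDef_map_eval [Finite ι] (hB : ∀ i j, (B i j).IsHomogeneous d)
    (hd : Even d) (hsymm : B.IsSymm) (a : Fin 2 → ℝ) {b : Fin 2 → ℝ}
    (hb : (B.map (eval b)).PosDef) :
    Bornology.IsBounded {s : ℝ | ¬(B.map (eval (a + s • b))).PosDef} := by
  have hopen : IsOpen {r : ℝ | (B.map (eval (r • a + b))).PosDef} :=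
    isOpen_setOf_posDef (continuous_map_eval (by fun_prop)) fun _ => hsymm.map _
  have hev : ∀ᶠ s in Bornology.cobounded ℝ, (B.map (eval (s⁻¹ • a + b))).PosDef :=
    tendsto_inv₀_cobounded.eventually (hopen.mem_nhds (by simpa using hb))
  rw [Bornology.isBounded_def]
  filter_upwards [hev, Bornology.eventually_ne_cobounded 0] with s hs hs0
  have hsmul : s • (s⁻¹ • a + b) = a + s • b := by rw [smul_add, smul_inv_smul₀ hs0]
  rw [← posDef_map_eval_smul_iff hB hd hs0, hsmul] at hs
  simpa using hs

theorem nonPosDefLocus_eq_univ (h : ∀ t : Fin 2 → ℝ, t ≠ 0 → ¬(B.map (eval t)).PosDef) :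
    nonPosDefLocus B = univ :=
  eq_univ_of_forall <| Quot.ind fun t => ⟨t, rfl, h t t.2⟩

theorem card_connectedComponents_nonPosDefLocus_le_affine
    (hB : ∀ i j, (B i j).IsHomogeneous d) (hd : Even d) {a b : Fin 2 → ℝ}
    (hab : a 0 * b 1 ≠ a 1 * b 0) (hb : (B.map (eval b)).PosDef) :
    ENat.card (ConnectedComponents (nonPosDefLocus B)) ≤
      ENat.card (ConnectedComponents {s : ℝ | ¬(B.map (eval (a + s • b))).PosDef}) := by
  have hmaps : MapsTo (affineChart a b hab) {s | ¬(B.map (eval (a + s • b))).PosDef}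
      (nonPosDefLocus B) := fun s hs => (affineChart_mem_nonPosDefLocus hB hd hab).2 hs
  refine card_connectedComponents_le_of_surjective
    ((continuous_affineChart a b hab).restrict hmaps) fun ⟨x, hx⟩ => ?_
  have hb0 : b ≠ 0 := by
    rintro rfl
    simp at hab
  obtain ⟨s, rfl⟩ := mem_range_affineChart hab hb0 (x := x) <| by
    rintro rfl
    exact (mk_mem_nonPosDefLocus hB hd).1 hx hb
  exact ⟨⟨s, (affineChart_mem_nonPosDefLocus hB hd hab).1 hx⟩, rfl⟩

theorem two_mul_card_connectedComponents_nonPosDefLocus_le [Fintype ι] [DecidableEq ι]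
    (hB : ∀ i j, (B i j).IsHomogeneous d) (hd : Even d) (hsymm : B.IsSymm)
    (hdet : ∀ t, ¬linForm t ^ 2 ∣ B.det) {b : Fin 2 → ℝ} (hb0 : b ≠ 0)
    (hb : (B.map (eval b)).PosDef) :
    2 * ENat.card (ConnectedComponents (nonPosDefLocus B)) ≤ (Fintype.card ι * d : ℕ) := by
  have hdet_hom : B.det.IsHomogeneous (Fintype.card ι * d) := isHomogeneous_det hB
  obtain ⟨a, hab⟩ : ∃ a : Fin 2 → ℝ, a 0 * b 1 ≠ a 1 * b 0 := by
    by_contra! h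
    have h0 : b 0 = 0 := by simpa using (h ![0, 1]).symm
    have h1 : b 1 = 0 := by simpa using h ![1, 0]
    exact hb0 (funext <| Fin.forall_fin_two.2 ⟨h0, h1⟩)
  let P := restrictLine a b B.det
  have hP_eval (s : ℝ) : (B.map (eval (a + s • b))).det = P.eval s := by
    rw [eval_restrictLine, aeval_eq_eval, RingHom.map_det]
    rfl
  have hP_simple (s : ℝ) (hs : P.IsRoot s) : ¬P.derivative.IsRoot s := fun hs' =>
    hdet _ (linForm_sq_dvd_of_isRoot hdet_hom hab hs hs')
  calc 2 * ENat.card (ConnectedComponents (nonPosDefLocus B))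
      ≤ 2 * ENat.card (ConnectedComponents {s : ℝ | ¬(B.map (eval (a + s • b))).PosDef}) := by
        gcongr
        exact card_connectedComponents_nonPosDefLocus_le_affine hB hd hab hb
    _ ≤ P.natDegree :=
        two_mul_card_connectedComponents_setOf_not_posDef_le (continuous_map_eval (by fun_prop))
          (fun _ => hsymm.map _) hP_eval hP_simple
          (isBounded_setOf_not_posDef_map_eval hB hd hsymm a hb)
    _ ≤ (Fintype.card ι * d : ℕ) := by exact_mod_cast natDegree_restrictLine_le hdet_hom a b

theorem card_connectedComponents_nonPosDefLocus_le [Fintype ι] [DecidableEq ι] {k : ℕ} (hk : k ≠ 0)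
    (hB : ∀ i j, (B i j).IsHomogeneous (2 * k)) (hsymm : B.IsSymm)
    (hdet : ∀ t, ¬linForm t ^ 2 ∣ B.det) :
    ENat.card (ConnectedComponents (nonPosDefLocus B)) ≤ (Fintype.card ι * k : ℕ) := by
  by_cases h : ∃ b : Fin 2 → ℝ, b ≠ 0 ∧ (B.map (eval b)).PosDef
  · obtain ⟨b, hb0, hb⟩ := h
    have hle :=
      two_mul_card_connectedComponents_nonPosDefLocus_le hB (even_two_mul k) hsymm hdet hb0 hb
    rw [Nat.mul_left_comm, Nat.cast_mul, Nat.cast_two] at hle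
    exact (ENat.mul_le_mul_left_iff two_ne_zero (by simp)).1 hle
  · push Not at h
    have hι : Nonempty ι := by
      by_contra hempty
      rw [not_nonempty_iff] at hempty
      exact h 1 one_ne_zero (.of_dotProduct_mulVec_pos (Subsingleton.elim _ _) fun v hv =>
        (hv (Subsingleton.elim _ _)).elim)
    have := preconnectedSpace_RP one_lt_two
    have hconn : PreconnectedSpace (nonPosDefLocus B) :=
      Subtype.preconnectedSpace (nonPosDefLocus_eq_univ h ▸ isPreconnected_univ)
    calc ENat.card (ConnectedComponents (nonPosDefLocus B)) ≤ 1 := ENat.card_le_one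
      _ ≤ (Fintype.card ι * k : ℕ) := by
        exact_mod_cast Nat.mul_pos Fintype.card_pos (Nat.pos_of_ne_zero hk)

end NonPosDefLocus

section QuadricBundle

open MvPolynomial Matrix

variable {ι : Type*} {M₁ M₂ M₃ : Matrix ι ι ℝ}

/-- The matrix `t₀²M₁ + 2t₀t₁M₂ + t₁²M₃` of the quadric bundle, with entries in `ℝ[t₀, t₁]`. -/
noncomputable def quadricBundleMatrix (M₁ M₂ M₃ : Matrix ι ι ℝ) :
    Matrix ι ι (MvPolynomial (Fin 2) ℝ) :=
  of fun i j =>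
    X 0 ^ 2 * C (M₁ i j) + 2 * X 0 * X 1 * C (M₂ i j) + X 1 ^ 2 * C (M₃ i j)

theorem isSymm_quadricBundleMatrix (hM₁ : M₁.IsSymm) (hM₂ : M₂.IsSymm) (hM₃ : M₃.IsSymm) :
    (quadricBundleMatrix M₁ M₂ M₃).IsSymm :=
  .ext fun i j => by simp only [quadricBundleMatrix, of_apply, hM₁.apply, hM₂.apply, hM₃.apply]

theorem isHomogeneous_quadricBundleMatrix (M₁ M₂ M₃ : Matrix ι ι ℝ) (i j : ι) :
    (quadricBundleMatrix M₁ M₂ M₃ i j).IsHomogeneous 2 := by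
  have hX (i : Fin 2) : (X i : MvPolynomial (Fin 2) ℝ).IsHomogeneous 1 := isHomogeneous_X ℝ i
  refine .add (.add ?_ ?_) ?_
  · exact ((hX 0).pow 2).mul (isHomogeneous_C _ _)
  · exact (((isHomogeneous_C _ (2 : ℝ)).mul (hX 0)).mul (hX 1)).mul (isHomogeneous_C _ _)
  · exact ((hX 1).pow 2).mul (isHomogeneous_C _ _)

theorem dotProduct_map_eval_quadricBundleMatrix_mulVec [Fintype ι] (M₁ M₂ M₃ : Matrix ι ι ℝ)
    (t : Fin 2 → ℝ) (v : ι → ℝ) :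
    v ⬝ᵥ (quadricBundleMatrix M₁ M₂ M₃).map (eval t) *ᵥ v = t 0 ^ 2 * (v ⬝ᵥ M₁ *ᵥ v) +
      2 * t 0 * t 1 * (v ⬝ᵥ M₂ *ᵥ v) + t 1 ^ 2 * (v ⬝ᵥ M₃ *ᵥ v) := by
  have hmap : (quadricBundleMatrix M₁ M₂ M₃).map (eval t) =
      t 0 ^ 2 • M₁ + (2 * t 0 * t 1) • M₂ + t 1 ^ 2 • M₃ := by
    ext i j
    simp [quadricBundleMatrix]
  simp only [hmap, add_mulVec, smul_mulVec, dotProduct_add, dotProduct_smul, smul_eq_mul]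

theorem nonPosDefLocus_neg_quadricBundleMatrix [Fintype ι] (hM₁ : M₁.IsSymm) (hM₂ : M₂.IsSymm)
    (hM₃ : M₃.IsSymm) :
    nonPosDefLocus (-quadricBundleMatrix M₁ M₂ M₃) =
      {x | ∃ t : {x : Fin 2 → ℝ // x ≠ 0}, Quot.mk (projRel 2) t = x ∧ ∃ v : ι → ℝ, v ≠ 0 ∧
        0 ≤ t.1 0 ^ 2 * (v ⬝ᵥ M₁ *ᵥ v) + 2 * t.1 0 * t.1 1 * (v ⬝ᵥ M₂ *ᵥ v) +
          t.1 1 ^ 2 * (v ⬝ᵥ M₃ *ᵥ v)} := by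
  ext x
  refine exists_congr fun t => and_congr_right fun _ => ?_
  have hmap : (-quadricBundleMatrix M₁ M₂ M₃).map (eval t.1) =
      -(quadricBundleMatrix M₁ M₂ M₃).map (eval t.1) := by
    ext
    simp
  have hherm : (-(quadricBundleMatrix M₁ M₂ M₃).map (eval t.1)).IsHermitian :=
    isHermitian_iff_isSymm.2 ((isSymm_quadricBundleMatrix hM₁ hM₂ hM₃).map _).neg
  simp only [hmap, posDef_iff_dotProduct_mulVec, hherm, true_and, star_trivial, neg_mulVec,
    dotProduct_neg, dotProduct_map_eval_quadricBundleMatrix_mulVec, neg_pos, not_forall, not_lt,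
    exists_prop, ne_eq]

theorem binarySextic_eq_map_det (M₁ M₂ M₃ : Matrix (Fin 3) (Fin 3) ℝ) :
    binarySextic M₁ M₂ M₃ =
      MvPolynomial.map Complex.ofRealHom (quadricBundleMatrix M₁ M₂ M₃).det := by
  rw [binarySextic, RingHom.map_det]
  congr 1
  ext1 i j
  simp [quadricBundleMatrix]

theorem not_linForm_sq_dvd_of_squarefree_binarySextic {M₁ M₂ M₃ : Matrix (Fin 3) (Fin 3) ℝ}
    (hsf : Squarefree (binarySextic M₁ M₂ M₃)) (t : Fin 2 → ℝ) :
    ¬linForm t ^ 2 ∣ (quadricBundleMatrix M₁ M₂ M₃).det := by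
  intro hdvd
  have hunit : IsUnit (MvPolynomial.map Complex.ofRealHom (linForm t)) := by
    refine hsf _ ?_
    rw [binarySextic_eq_map_det, ← map_mul, ← sq]
    exact map_dvd _ hdvd
  have hzero : eval (fun i => (t i : ℂ)) (MvPolynomial.map Complex.ofRealHom (linForm t)) = 0 := by
    simp [linForm, mul_comm]
  exact not_isUnit_zero (hzero ▸ hunit.map (eval fun i => (t i : ℂ)))

end QuadricBundle

open Matrix in
theorem image_of_quadric_bundle_at_most_three_components_general {n : ℕ}
    (M₁ M₂ M₃ : Matrix (Fin n) (Fin n) ℝ)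
    (hM₁ : M₁.IsSymm) (hM₂ : M₂.IsSymm) (hM₃ : M₃.IsSymm)
    (Q₁ Q₂ Q₃ : (Fin n → ℝ) → ℝ)
    (hQ₁ : ∀ v, Q₁ v = v ⬝ᵥ (M₁ *ᵥ v)) (hQ₂ : ∀ v, Q₂ v = v ⬝ᵥ (M₂ *ᵥ v))
    (hQ₃ : ∀ v, Q₃ v = v ⬝ᵥ (M₃ *ᵥ v))
    (hdet : ∀ t, ¬linForm t ^ 2 ∣ (quadricBundleMatrix M₁ M₂ M₃).det)
    (S₁ : Set (RP 2))
    (hS₁ : S₁ = {x | ∃ t : {x : Fin 2 → ℝ // x ≠ 0}, Quot.mk (projRel 2) t = x ∧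
      ∃ v : Fin n → ℝ, v ≠ 0 ∧
        0 ≤ (t : Fin 2 → ℝ) 0 ^ 2 * Q₁ v
          + 2 * (t : Fin 2 → ℝ) 0 * (t : Fin 2 → ℝ) 1 * Q₂ v
          + (t : Fin 2 → ℝ) 1 ^ 2 * Q₃ v}) :
    ∃ f : ConnectedComponents ↥S₁ → Fin n, Function.Injective f := by
  have hlocus : S₁ = nonPosDefLocus (-quadricBundleMatrix M₁ M₂ M₃) := by
    rw [hS₁, nonPosDefLocus_neg_quadricBundleMatrix hM₁ hM₂ hM₃]
    simp only [hQ₁, hQ₂, hQ₃]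
    rfl
  have hdet_neg (t) : ¬linForm t ^ 2 ∣ (-quadricBundleMatrix M₁ M₂ M₃).det := by
    rw [det_neg, (isUnit_one.neg.pow _).dvd_mul_left]
    exact hdet t
  have hcard : ENat.card (ConnectedComponents S₁) ≤ n := by
    rw [hlocus]
    simpa only [Fintype.card_fin, mul_one] using
      card_connectedComponents_nonPosDefLocus_le (B := -quadricBundleMatrix M₁ M₂ M₃)
        one_ne_zero (fun i j => (isHomogeneous_quadricBundleMatrix M₁ M₂ M₃ i j).neg)
        (isSymm_quadricBundleMatrix hM₁ hM₂ hM₃).neg hdet_neg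
  exact exists_injective_fin_of_card_le hcard

open Matrix in
/-- If the binary sextic `p(t₀,t₁) = det(t₀²M₁ + 2t₀t₁M₂ + t₁²M₃)` is nonzero and squarefree
over `ℂ` (equivalently, the genus 2 curve `Γ : y² = −p` is smooth), then the image
`S₁ ⊆ ℝP¹` of the real points of the quadric surface bundle `π₁ : Y → ℙ¹` has at most three
connected components. -/
theorem image_of_quadric_bundle_at_most_three_components
    (M₁ M₂ M₃ : Matrix (Fin 3) (Fin 3) ℝ)
    (hM₁ : M₁.IsSymm) (hM₂ : M₂.IsSymm) (hM₃ : M₃.IsSymm)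
    (Q₁ Q₂ Q₃ : (Fin 3 → ℝ) → ℝ)
    (hQ₁ : ∀ v, Q₁ v = v ⬝ᵥ (M₁ *ᵥ v)) (hQ₂ : ∀ v, Q₂ v = v ⬝ᵥ (M₂ *ᵥ v))
    (hQ₃ : ∀ v, Q₃ v = v ⬝ᵥ (M₃ *ᵥ v))
    (hp : binarySextic M₁ M₂ M₃ ≠ 0) (hsf : Squarefree (binarySextic M₁ M₂ M₃))
    (S₁ : Set (RP 2))
    (hS₁ : S₁ = {x | ∃ t : {x : Fin 2 → ℝ // x ≠ 0}, Quot.mk (projRel 2) t = x ∧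
      ∃ v : Fin 3 → ℝ, v ≠ 0 ∧
        0 ≤ (t : Fin 2 → ℝ) 0 ^ 2 * Q₁ v
          + 2 * (t : Fin 2 → ℝ) 0 * (t : Fin 2 → ℝ) 1 * Q₂ v
          + (t : Fin 2 → ℝ) 1 ^ 2 * Q₃ v}) :
    ∃ f : ConnectedComponents ↥S₁ → Fin 3, Function.Injective f :=
  image_of_quadric_bundle_at_most_three_components_general M₁ M₂ M₃ hM₁ hM₂ hM₃ Q₁ Q₂ Q₃
    hQ₁ hQ₂ hQ₃ (not_linForm_sq_dvd_of_squarefree_binarySextic hsf) S₁ hS₁
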